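/- arXiv:2411.04250 — 2 statements merged into one kernel-verified Lean document; each statement's English description precedes it below -/
import Mathlib

section
/- Let G be a group acting on a set Y and suppose G is generated by two elements a and b. Suppose there exist four pairwise disjoint nonempty subsets Y₁⁺, Y₁⁻, Y₂⁺, Y₂⁻ of Y, and let Y' denote their union. Assume that for every integer k ≥ 1 one has: aᵏ · (Y' \ Y₁⁻) ⊆ Y₁⁺, a⁻ᵏ · (Y' \ Y₁⁺) ⊆ Y₁⁻, bᵏ · (Y' \ Y₂⁻) ⊆ Y₂⁺, and b⁻ᵏ · (Y' \ Y₂⁺) ⊆ Y₂⁻. Then the group homomorphism from the free group on two generators to G sending the two generators to a and b respectively is injective; in particular, since a and b generate G, the group G is isomorphic to a free group of rank 2. -/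
open Pointwise

theorem ping_pong_aux {G Y : Type*} [Group G] [MulAction G Y] (f : Fin 2 → G)
    (S : Fin 2 × Bool → Set Y)
    (hS : ∀ p q x, x ∈ S q → q ≠ (p.1, !p.2) → (cond p.2 (f p.1) (f p.1)⁻¹) • x ∈ S p)
    (L : List (Fin 2 × Bool)) : ∀ p, FreeGroup.IsReduced (p :: L) → ∀ q x, x ∈ S q →
      (q ≠ (((p :: L).getLast (by simp)).1, !((p :: L).getLast (by simp)).2)) →
      FreeGroup.lift f (FreeGroup.mk (p :: L)) • x ∈ S p := by
  induction L with
  | nil =>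
    intro p _ q x hx hq
    simpa [FreeGroup.lift_mk] using hS p q x hx hq
  | cons r L ih =>
    intro p hp q x hx hq
    rw [FreeGroup.isReduced_cons_cons] at hp
    have h := ih r hp.2 q x hx (by simpa using hq)
    have h2 := hS p r _ h (by
      rintro rfl
      have := hp.1 rfl
      simp at this)
    simpa [FreeGroup.lift_mk, mul_smul] using h2

/-- Ping-pong lemma: if a group `G` generated by two elements `a` and `b` acts on a set `Y`
with four pairwise disjoint nonempty subsets satisfying the ping-pong conditions, then the
natural homomorphism from the free group on two generators sending the generators to `a`
and `b` is injective, i.e. `G` is free of rank 2. -/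
theorem ping_pong_free_group {G Y : Type*} [Group G] [MulAction G Y]
    (a b : G) (hgen : Subgroup.closure ({a, b} : Set G) = ⊤)
    (Y₁p Y₁m Y₂p Y₂m : Set Y)
    (h₁p : Y₁p.Nonempty) (h₁m : Y₁m.Nonempty) (h₂p : Y₂p.Nonempty) (h₂m : Y₂m.Nonempty)
    (hd₁ : Disjoint Y₁p Y₁m) (hd₂ : Disjoint Y₁p Y₂p) (hd₃ : Disjoint Y₁p Y₂m)
    (hd₄ : Disjoint Y₁m Y₂p) (hd₅ : Disjoint Y₁m Y₂m) (hd₆ : Disjoint Y₂p Y₂m)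
    (Y' : Set Y) (hY' : Y' = Y₁p ∪ Y₁m ∪ Y₂p ∪ Y₂m)
    (ha : ∀ k : ℤ, 1 ≤ k → a ^ k • (Y' \ Y₁m) ⊆ Y₁p)
    (ha' : ∀ k : ℤ, 1 ≤ k → a ^ (-k) • (Y' \ Y₁p) ⊆ Y₁m)
    (hb : ∀ k : ℤ, 1 ≤ k → b ^ k • (Y' \ Y₂m) ⊆ Y₂p)
    (hb' : ∀ k : ℤ, 1 ≤ k → b ^ (-k) • (Y' \ Y₂p) ⊆ Y₂m) :
    Function.Injective (FreeGroup.lift (![a, b] : Fin 2 → G)) := by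
  let S : Fin 2 × Bool → Set Y := fun p =>
    (![cond p.2 Y₁p Y₁m, cond p.2 Y₂p Y₂m] : Fin 2 → Set Y) p.1
  have hd : ∀ p q, p ≠ q → Disjoint (S p) (S q) := by
    rintro ⟨i, e⟩ ⟨j, e'⟩ h
    fin_cases i <;> fin_cases j <;> cases e <;> cases e' <;>
      first
      | exact absurd rfl h
      | assumption
      | (apply Disjoint.symm; assumption)
  have hne : ∀ p, (S p).Nonempty := by
    rintro ⟨i, e⟩
    fin_cases i <;> cases e <;> assumption
  have hsub : ∀ p, S p ⊆ Y' := by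
    rintro ⟨i, e⟩ x hx
    rw [hY']
    fin_cases i <;> cases e <;> simp [S] at hx <;> simp [hx]
  have hS : ∀ p q x, x ∈ S q → q ≠ (p.1, !p.2) →
      (cond p.2 ((![a, b] : Fin 2 → G) p.1) ((![a, b] : Fin 2 → G) p.1)⁻¹) • x ∈ S p := by
    intro p q x hx hq
    have h1 : x ∈ Y' := hsub q hx
    have h2 : x ∉ S (p.1, !p.2) := fun h => Set.disjoint_left.1 (hd _ _ hq) hx h
    obtain ⟨i, e⟩ := p
    fin_cases i <;> cases e
    · simpa [S] using ha' 1 le_rfl (Set.smul_mem_smul_set ⟨h1, h2⟩)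
    · simpa [S] using ha 1 le_rfl (Set.smul_mem_smul_set ⟨h1, h2⟩)
    · simpa [S] using hb' 1 le_rfl (Set.smul_mem_smul_set ⟨h1, h2⟩)
    · simpa [S] using hb 1 le_rfl (Set.smul_mem_smul_set ⟨h1, h2⟩)
  rw [injective_iff_map_eq_one]
  intro w hw
  have hred : FreeGroup.IsReduced w.toWord := FreeGroup.isReduced_toWord
  have hmk : FreeGroup.mk w.toWord = w := FreeGroup.mk_toWord
  rcases hL : w.toWord with _ | ⟨p, L⟩
  · exact FreeGroup.toWord_eq_nil_iff.1 hL
  · exfalso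
    rw [hL] at hred hmk
    have hex : ∀ u v : Fin 2 × Bool, ∃ q, q ≠ u ∧ q ≠ v := by decide
    obtain ⟨q, hq1, hq2⟩ := hex p
      (((p :: L).getLast (by simp)).1, !((p :: L).getLast (by simp)).2)
    obtain ⟨x, hx⟩ := hne q
    have h := ping_pong_aux _ S hS L p hred q x hx hq2
    rw [hmk, hw, one_smul] at h
    exact Set.disjoint_left.1 (hd _ _ hq1) hx h
end

section
/- Let X be a nonempty metric space, let s be a subset of X, and let π : X → X be a 1-Lipschitz nearest-point projection onto s, meaning: π is 1-Lipschitz, for every x ∈ X, π x ∈ s and dist x (π x) = infDist x s, and for every x ∈ X and every y ∈ s with dist x y = infDist x s one has y = π x. Let g : X ≃ᵢ X be a bijective isometry of X mapping s onto itself (g '' s = s). Define the translation length |g| = ⨅_{y ∈ X} dist y (g y), and the minimal set Min(g) = { x ∈ X : dist x (g x) = |g| }. Then for every x ∈ Min(g), the projection π x also belongs to Min(g). -/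
/-- If `π` is a 1-Lipschitz nearest-point projection of a nonempty metric space `X` onto a
subset `s`, and `g` is a bijective isometry of `X` mapping `s` onto itself, then the
projection of any point of `Min(g)` (the set of points realizing the translation length
`|g| = ⨅ y, dist y (g y)`) again belongs to `Min(g)`. -/
theorem proj_mem_min_set {X : Type*} [MetricSpace X] [Nonempty X]
    (s : Set X) (π : X → X)
    (hπ_lip : LipschitzWith 1 π)
    (hπ_mem : ∀ x : X, π x ∈ s)
    (hπ_dist : ∀ x : X, dist x (π x) = Metric.infDist x s)
    (hπ_unique : ∀ x : X, ∀ y ∈ s, dist x y = Metric.infDist x s → y = π x)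
    (g : X ≃ᵢ X) (hgs : g '' s = s) :
    ∀ x ∈ {x : X | dist x (g x) = ⨅ y : X, dist y (g y)},
      π x ∈ {x : X | dist x (g x) = ⨅ y : X, dist y (g y)} := by
  intro x hx
  simp only [Set.mem_setOf_eq] at hx ⊢
  have heq : g (π x) = π (g x) := by
    apply hπ_unique
    · rw [← hgs]
      exact Set.mem_image_of_mem _ (hπ_mem x)
    · have h := Metric.infDist_image (x := x) (t := s) g.isometry
      rw [hgs] at h
      rw [g.isometry.dist_eq, hπ_dist, h]
  apply le_antisymm
  · rw [← hx, heq]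
    simpa using hπ_lip.dist_le_mul x (g x)
  · exact ciInf_le ⟨0, by rintro _ ⟨y, rfl⟩; exact dist_nonneg⟩ (π x)
end
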